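/- Assume π̄(a) > 0 for every a ∈ A. Then the revealed attention function and revealed choice function reproduce the policy (the data-matching condition): for every x ∈ X and a ∈ A, π(a|x) = ∑_{s ∈ S'} α'(s|x)·η'(a|s). Moreover, for each x, ∑_{s∈S'} α'(s|x) = 1 and α'(s|x) ≥ 0, i.e., α' is an attention function. -/

import Mathlib

open Finset
open scoped Classical

/-- The induced action probability `π̄(a) = ∑_x μ(x) π(a|x)`. -/
noncomputable def actProb {X A : Type*} [Fintype X]
    (μ : X → ℝ) (π : X → A → ℝ) (a : A) : ℝ :=
  ∑ x, μ x * π x a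

/-- The revealed posterior `p(·|a)`, as a function on `X`:
`p(x|a) = μ(x) π(a|x) / π̄(a)`. -/
noncomputable def revPost {X A : Type*} [Fintype X]
    (μ : X → ℝ) (π : X → A → ℝ) (a : A) : X → ℝ :=
  fun x => μ x * π x a / actProb μ π a

/-- The revealed signal set `S' = {p(·|a) : a ∈ A}`. -/
noncomputable def revSignals {X A : Type*} [Fintype X] [Fintype A]
    (μ : X → ℝ) (π : X → A → ℝ) : Finset (X → ℝ) :=
  Finset.univ.image (revPost μ π)

/-- The revealed attention function `α'(s|x) = ∑_{a : p(·|a) = s} π(a|x)`. -/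
noncomputable def revAtt {X A : Type*} [Fintype X] [Fintype A]
    (μ : X → ℝ) (π : X → A → ℝ) (s : X → ℝ) (x : X) : ℝ :=
  ∑ a, if revPost μ π a = s then π x a else 0

/-- The revealed choice function
`η'(a|s) = π̄(a) 1{p(·|a) = s} / ∑_{b : p(·|b) = s} π̄(b)`. -/
noncomputable def revChoice {X A : Type*} [Fintype X] [Fintype A]
    (μ : X → ℝ) (π : X → A → ℝ) (s : X → ℝ) (a : A) : ℝ :=
  (actProb μ π a * if revPost μ π a = s then (1:ℝ) else 0) /
    ∑ b, if revPost μ π b = s then actProb μ π b else 0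

section Revealed

variable {X A : Type*} [Fintype X] {μ : X → ℝ} {π : X → A → ℝ} {s : X → ℝ} {a : A} {x : X}

theorem revPost_mul_actProb (ha : actProb μ π a ≠ 0) :
    revPost μ π a x * actProb μ π a = μ x * π x a :=
  div_mul_cancel₀ _ ha

variable [Fintype A]

/-- The unconditional probability `∑_{b : p(·|b) = s} π̄(b)` of the revealed signal `s`, which is
the denominator of the revealed choice function `η'(·|s)`. -/
noncomputable def signalProb (μ : X → ℝ) (π : X → A → ℝ) (s : X → ℝ) : ℝ :=
  ∑ b, if revPost μ π b = s then actProb μ π b else 0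

theorem signalProb_revPost_pos (hnn : ∀ b, 0 ≤ actProb μ π b) (ha : 0 < actProb μ π a) :
    0 < signalProb μ π (revPost μ π a) := by
  refine sum_pos' (fun b _ => ?_) ⟨a, mem_univ a, ?_⟩
  · exact ite_nonneg (hnn b) le_rfl
  · rwa [if_pos rfl]

-- Bayes' rule for signals: it follows from Bayes' rule for actions because all actions pooled
-- into `s` share the posterior `s`.
theorem mul_revAtt (hne : ∀ b, actProb μ π b ≠ 0) :
    μ x * revAtt μ π s x = s x * signalProb μ π s := by
  rw [revAtt, signalProb, mul_sum, mul_sum]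
  refine sum_congr rfl fun b _ => ?_
  split_ifs with hb
  · rw [← hb, revPost_mul_actProb (hne b)]
  · rw [mul_zero, mul_zero]

theorem revAtt_nonneg (hnn : ∀ b, 0 ≤ π x b) : 0 ≤ revAtt μ π s x :=
  sum_nonneg fun b _ => ite_nonneg (hnn b) le_rfl

theorem revPost_mem_revSignals : revPost μ π a ∈ revSignals μ π :=
  mem_image_of_mem _ (mem_univ a)

theorem sum_revAtt : ∑ s ∈ revSignals μ π, revAtt μ π s x = ∑ b, π x b := by
  simp only [revAtt]
  rw [sum_comm]
  exact sum_congr rfl fun b _ => by rw [sum_ite_eq, if_pos revPost_mem_revSignals]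

theorem revChoice_revPost :
    revChoice μ π (revPost μ π a) a = actProb μ π a / signalProb μ π (revPost μ π a) := by
  rw [revChoice, if_pos rfl, mul_one, signalProb]

theorem revChoice_eq_zero (hs : revPost μ π a ≠ s) : revChoice μ π s a = 0 := by
  rw [revChoice, if_neg hs, mul_zero, zero_div]

theorem sum_revAtt_mul_revChoice :
    ∑ s ∈ revSignals μ π, revAtt μ π s x * revChoice μ π s a =
      revAtt μ π (revPost μ π a) x * revChoice μ π (revPost μ π a) a :=
  sum_eq_single_of_mem _ revPost_mem_revSignals fun s _ hs => by
    rw [revChoice_eq_zero hs.symm, mul_zero]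

theorem revAtt_mul_revChoice_revPost (hx : μ x ≠ 0) (hpos : ∀ b, 0 < actProb μ π b) :
    revAtt μ π (revPost μ π a) x * revChoice μ π (revPost μ π a) a = π x a := by
  have hne : ∀ b, actProb μ π b ≠ 0 := fun b => (hpos b).ne'
  have hs : signalProb μ π (revPost μ π a) ≠ 0 :=
    (signalProb_revPost_pos (fun b => (hpos b).le) (hpos a)).ne'
  refine mul_left_cancel₀ hx ?_
  calc μ x * (revAtt μ π (revPost μ π a) x * revChoice μ π (revPost μ π a) a)
      = revPost μ π a x * signalProb μ π (revPost μ π a) *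
          (actProb μ π a / signalProb μ π (revPost μ π a)) := by
        rw [← mul_assoc, mul_revAtt hne, revChoice_revPost]
    _ = revPost μ π a x * actProb μ π a := by rw [mul_assoc, mul_div_cancel₀ _ hs]
    _ = μ x * π x a := revPost_mul_actProb (hne a)

end Revealed

/-- Data matching: the revealed attention and choice functions reproduce the observed
action-selection policy, and the revealed attention function is a bona fide attention
function (nonnegative, summing to one over the revealed signal set). -/
theorem revealed_data_matching
    {X A : Type*} [Fintype X] [Fintype A]
    (μ : X → ℝ) (hμpos : ∀ x, 0 < μ x) (hμsum : ∑ x, μ x = 1)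
    (π : X → A → ℝ) (hπnn : ∀ x a, 0 ≤ π x a) (hπsum : ∀ x, ∑ a, π x a = 1)
    (hπbar : ∀ a, 0 < actProb μ π a) :
    ((∀ x a, π x a = ∑ s ∈ revSignals μ π, revAtt μ π s x * revChoice μ π s a)
    ∧ (∀ x, ∑ s ∈ revSignals μ π, revAtt μ π s x = 1)
    ∧ (∀ s x, 0 ≤ revAtt μ π s x)) := by
  refine ⟨fun x a => ?_, fun x => ?_, fun _ x => revAtt_nonneg (hπnn x)⟩
  · rw [sum_revAtt_mul_revChoice, revAtt_mul_revChoice_revPost (hμpos x).ne' hπbar]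
  · rw [sum_revAtt, hπsum x]
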